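/- arXiv:1601.03174 — 2 statements merged into one kernel-verified Lean document; each statement's English description precedes it below -/
import Mathlib

section
/- Let G be a graph whose maximum degree is at most D_max, let U ⊆ V(G), let D be a set of edges of G−U, and let A be a set of unordered pairs of distinct non-adjacent vertices of V(G)∖U, and let G' = G−U−D+A. Then for every nonnegative integer i, the number of vertices of degree i in G' and the number of vertices of degree i in G differ by at most (D_max+1)·|U| + 2|D| + 2|A|. -/
/-- The degree of a vertex, as the `ncard` of its neighbor set. -/
noncomputable def ndeg {V : Type*} (H : SimpleGraph V) (v : V) : ℕ :=
  (H.neighborSet v).ncard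

/-- The graph `G - U - D + A`, obtained from `G` by deleting the vertices of `U`
(together with all incident edges), deleting the edges of `D` and adding the pairs of `A`
as edges. (The deleted vertices become isolated; degrees are only read off `V ∖ U`.) -/
def edit {V : Type*} (G : SimpleGraph V) (U : Finset V) (D A : Set (Sym2 V)) :
    SimpleGraph V :=
  SimpleGraph.fromEdgeSet ((G.edgeSet \ (D ∪ {e : Sym2 V | ∃ u ∈ U, u ∈ e})) ∪ A)

/-!
The vertices of `U`, their neighbors, and the endpoints of the pairs in `D` and `A` together number
at most `(Dmax + 1) * |U| + 2 * |D| + 2 * |A|`. Every other vertex survives and keeps its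
neighborhood, so the degree-`i` classes of the two graphs agree outside these vertices.
-/

section Cardinality

variable {α ι : Type*}

theorem encard_biUnion_le_card_mul (t : Finset ι) (s : ι → Set α) (n : ℕ∞)
    (hn : ∀ i ∈ t, (s i).encard ≤ n) : (⋃ i ∈ t, s i).encard ≤ t.card * n :=
  calc (⋃ i ∈ t, s i).encard
    _ ≤ ∑ i ∈ t, (s i).encard := t.set_encard_biUnion_le s
    _ ≤ t.card • n := t.sum_le_card_nsmul _ n hn
    _ = t.card * n := nsmul_eq_mul _ _

theorem encard_coe_sym2_le_two (e : Sym2 α) : (e : Set α).encard ≤ 2 := by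
  induction e with
  | h x y =>
    calc (s(x, y) : Set α).encard
      _ = ({x, y} : Set α).encard := by rw [Sym2.coe_mk]
      _ ≤ ({y} : Set α).encard + 1 := Set.encard_insert_le {y} x
      _ = 2 := by rw [Set.encard_singleton, one_add_one_eq_two]

theorem ncard_le_ncard_add_of_sdiff_eq {s t b : Set α} (ht : t.Finite) (hb : b.Finite)
    (h : s \ b = t \ b) : s.ncard ≤ t.ncard + b.ncard :=
  calc s.ncard
    _ ≤ (s \ b).ncard + b.ncard := Set.ncard_le_ncard_sdiff_add_ncard s b hb
    _ = (t \ b).ncard + b.ncard := by rw [h]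
    _ ≤ t.ncard + b.ncard := by gcongr; exact Set.sdiff_subset

theorem abs_ncard_sub_ncard_le_of_sdiff_eq {s t b : Set α} (ht : t.Finite) (hb : b.Finite)
    (h : s \ b = t \ b) : |(s.ncard : ℤ) - t.ncard| ≤ b.ncard := by
  have hs : s.Finite := Set.Finite.of_sdiff (h ▸ ht.sdiff) hb
  have hst := ncard_le_ncard_add_of_sdiff_eq ht hb h
  have hts := ncard_le_ncard_add_of_sdiff_eq hs hb h.symm
  rw [abs_sub_le_iff]
  omega

end Cardinality

section Edit

variable {V : Type*} {G : SimpleGraph V} {U : Finset V}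

/-- The vertices that the passage from `G` to `G - U - D + A` may affect: those of `U`, their
neighbors in `G`, and the endpoints of the pairs in `D` and `A`. -/
def affectedVertices (G : SimpleGraph V) (U : Finset V) (D A : Set (Sym2 V)) : Set V :=
  ↑U ∪ (⋃ u ∈ U, G.neighborSet u) ∪ (⋃ e ∈ D, (e : Set V)) ∪ ⋃ e ∈ A, (e : Set V)

theorem notMem_affectedVertices {D A : Set (Sym2 V)} {v : V} :
    v ∉ affectedVertices G U D A ↔
      v ∉ U ∧ (∀ u ∈ U, ¬ G.Adj u v) ∧ (∀ e ∈ D, v ∉ e) ∧ ∀ e ∈ A, v ∉ e := by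
  simp [affectedVertices, and_assoc]

theorem edit_adj {D A : Set (Sym2 V)} {v w : V} :
    (edit G U D A).Adj v w ↔
      (G.Adj v w ∧ s(v, w) ∉ D ∧ v ∉ U ∧ w ∉ U ∨ s(v, w) ∈ A) ∧ v ≠ w := by
  simp only [edit, SimpleGraph.fromEdgeSet_adj, Set.mem_union, Set.mem_sdiff,
    SimpleGraph.mem_edgeSet, Set.mem_ofPred_eq, Sym2.mem_iff]
  grind

theorem neighborSet_edit_of_notMem_affectedVertices {D A : Set (Sym2 V)} {v : V}
    (hv : v ∉ affectedVertices G U D A) :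
    (edit G U D A).neighborSet v = G.neighborSet v := by
  obtain ⟨hvU, hvN, hvD, hvA⟩ := notMem_affectedVertices.1 hv
  ext w
  have hD : s(v, w) ∉ D := fun h ↦ hvD _ h (Sym2.mem_mk_left v w)
  have hA : s(v, w) ∉ A := fun h ↦ hvA _ h (Sym2.mem_mk_left v w)
  have hU : G.Adj v w → w ∉ U := fun h hw ↦ hvN w hw h.symm
  rw [SimpleGraph.mem_neighborSet, SimpleGraph.mem_neighborSet, edit_adj]
  exact ⟨fun h ↦ (h.1.resolve_right hA).1, fun h ↦ ⟨.inl ⟨h, hD, hvU, hU h⟩, h.ne⟩⟩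

theorem setOf_ndeg_edit_sdiff_affectedVertices (D A : Set (Sym2 V)) (i : ℕ) :
    {v | v ∉ U ∧ ndeg (edit G U D A) v = i} \ affectedVertices G U D A =
      {v | ndeg G v = i} \ affectedVertices G U D A := by
  ext v
  refine and_congr_left fun hv ↦ ?_
  have hvU : v ∉ U := (notMem_affectedVertices.1 hv).1
  simp only [Set.mem_ofPred_eq, ndeg, neighborSet_edit_of_notMem_affectedVertices hv, hvU,
    not_false_eq_true, true_and]

theorem encard_affectedVertices_le {Dmax : ℕ}
    (hmax : ∀ u ∈ U, (G.neighborSet u).encard ≤ Dmax) (D A : Finset (Sym2 V)) :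
    (affectedVertices G U D A).encard ≤
      ((Dmax + 1) * U.card + 2 * D.card + 2 * A.card : ℕ) := by
  have endpoints_le (S : Finset (Sym2 V)) : (⋃ e ∈ S, (e : Set V)).encard ≤ S.card * 2 :=
    encard_biUnion_le_card_mul S _ 2 fun e _ ↦ encard_coe_sym2_le_two e
  calc (affectedVertices G U D A).encard
    _ ≤ (U : Set V).encard + (⋃ u ∈ U, G.neighborSet u).encard +
          (⋃ e ∈ D, (e : Set V)).encard + (⋃ e ∈ A, (e : Set V)).encard := by
      unfold affectedVertices
      grw [Set.encard_union_le, Set.encard_union_le, Set.encard_union_le]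
      rfl
    _ ≤ U.card + U.card * Dmax + D.card * 2 + A.card * 2 := by
      grw [Set.encard_coe_eq_coe_finsetCard, encard_biUnion_le_card_mul U _ _ hmax,
        endpoints_le D, endpoints_le A]
    _ = ((Dmax + 1) * U.card + 2 * D.card + 2 * A.card : ℕ) := by
      push_cast
      ring

theorem degree_vector_entries_change_boundedly_general {Dmax : ℕ}
    (hmax : ∀ u ∈ U, (G.neighborSet u).encard ≤ Dmax) (D A : Finset (Sym2 V)) {i : ℕ}
    (hi : {v | ndeg G v = i}.Finite) :
    |({v | v ∉ U ∧ ndeg (edit G U D A) v = i}.ncard : ℤ) - {v | ndeg G v = i}.ncard| ≤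
      ((Dmax + 1) * U.card + 2 * D.card + 2 * A.card : ℕ) := by
  obtain ⟨hfin, hcard⟩ :=
    Set.encard_le_coe_iff_finite_ncard_le.1 (encard_affectedVertices_le hmax D A)
  calc |({v | v ∉ U ∧ ndeg (edit G U D A) v = i}.ncard : ℤ) - {v | ndeg G v = i}.ncard|
    _ ≤ (affectedVertices G U D A).ncard :=
      abs_ncard_sub_ncard_le_of_sdiff_eq hi hfin (setOf_ndeg_edit_sdiff_affectedVertices _ _ i)
    _ ≤ ((Dmax + 1) * U.card + 2 * D.card + 2 * A.card : ℕ) := mod_cast hcard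

end Edit

theorem degree_vector_entries_change_boundedly
    {V : Type*} [Fintype V] (G : SimpleGraph V) (Dmax : ℕ)
    (hmax : ∀ v : V, ndeg G v ≤ Dmax)
    (U : Finset V) (D A : Finset (Sym2 V))
    (hD : ∀ e ∈ D, e ∈ G.edgeSet ∧ ∀ u ∈ U, u ∉ e)
    (hA : ∀ e ∈ A, ¬ e.IsDiag ∧ e ∉ G.edgeSet ∧ ∀ u ∈ U, u ∉ e) :
    ∀ i : ℕ,
      |({v : V | v ∉ U ∧ ndeg (edit G U ↑D ↑A) v = i}.ncard : ℤ) -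
          ({v : V | ndeg G v = i}.ncard : ℤ)| ≤
        (((Dmax + 1) * U.card + 2 * D.card + 2 * A.card : ℕ) : ℤ) := by
  have hmaxU : ∀ u ∈ U, (G.neighborSet u).encard ≤ Dmax := fun u _ ↦
    Set.encard_le_coe_iff_finite_ncard_le.2 ⟨Set.toFinite _, hmax u⟩
  exact fun i ↦ degree_vector_entries_change_boundedly_general hmaxU D A (Set.toFinite _)
end

section
/- Let k be a nonnegative integer, let σ be a finite multiset of nonnegative integers with maximum Δ, and let G be a graph with maximum degree at most Δ. For each i ∈ {0, …, Δ} let W_i = {v ∈ V(G) : d_G(v) = i}, let W_i' ⊆ W_i be any subset of size min(|W_i|, 2k(Δ+1)), and let W = W_0' ∪ ⋯ ∪ W_Δ'. If there exists a set A of unordered pairs of distinct non-adjacent vertices of G with |A| ≤ k such that the degree multiset of G+A equals σ, then there exists such a set A with |A| ≤ k and degree multiset of G+A equal to σ in which every pair has both of its endpoints in W. -/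
/-!
Exchange argument. Suppose an endpoint `v` of `A` lies outside `W`. Then the chosen vertices of
degree `d_G(v)` are `2k(Δ+1)` in number and do not include `v`, whereas the at most `2k` endpoints
of `A` and their `G`-neighbours form a set of at most `2k(Δ+1)` vertices that does include `v`.
So some chosen `w` of the same degree as `v` is neither an endpoint of `A` nor adjacent to one, and
transporting `A` along the transposition `(v w)` yields non-edges again. This permutes the degrees
of `G + A` and leaves one endpoint fewer outside `W`.
-/

open SimpleGraph

theorem ndeg_sup_of_disjoint {V : Type*} {G H : SimpleGraph V} (hGH : Disjoint G H) {v : V}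
    (hG : (G.neighborSet v).Finite) (hH : (H.neighborSet v).Finite) :
    ndeg (G ⊔ H) v = ndeg G v + ndeg H v := by
  rw [ndeg, neighborSet_sup, Set.ncard_union_eq _ hG hH, ndeg, ndeg]
  exact Set.disjoint_left.2 fun _ hu hu' => disjoint_left.1 hGH _ _ hu hu'

theorem ndeg_map {V V' : Type*} (H : SimpleGraph V) (f : V ↪ V') (v : V) :
    ndeg (H.map f) (f v) = ndeg H v := by
  rw [ndeg, neighborSet_map, Set.ncard_image_of_injective _ f.injective, ndeg]

theorem fromEdgeSet_image_map {V V' : Type*} (f : V ↪ V') (A : Set (Sym2 V)) :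
    fromEdgeSet (Sym2.map f '' A) = (fromEdgeSet A).map f := by
  have hdiag : Sym2.map f ⁻¹' Sym2.diagSet = Sym2.diagSet :=
    Set.ext fun _ => Sym2.isDiag_map f.injective
  rw [← edgeSet_inj, edgeSet_map, edgeSet_fromEdgeSet, edgeSet_fromEdgeSet, ← hdiag]
  exact (Set.image_sdiff_preimage ..).symm

theorem finite_neighborSet_fromEdgeSet {V : Type*} {A : Set (Sym2 V)} (hA : A.Finite) (v : V) :
    ((fromEdgeSet A).neighborSet v).Finite := by
  refine (hA.preimage (f := fun u => s(v, u)) ?_).subset fun u hu => ?_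
  · exact fun a _ b _ hab => Sym2.congr_right.1 hab
  · exact ((fromEdgeSet_adj A).1 hu).1

theorem subset_edgeSet_compl_iff {V : Type*} {G : SimpleGraph V} {A : Set (Sym2 V)} :
    A ⊆ Gᶜ.edgeSet ↔ ∀ e ∈ A, ¬e.IsDiag ∧ e ∉ G.edgeSet := by
  refine forall₂_congr fun e _ => ?_
  induction e with
  | _ a b => simp

theorem disjoint_fromEdgeSet_of_subset_edgeSet_compl {V : Type*} {G : SimpleGraph V}
    {A : Set (Sym2 V)} (hA : A ⊆ Gᶜ.edgeSet) : Disjoint G (fromEdgeSet A) :=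
  (disjoint_fromEdgeSet _ _).2 <| (disjoint_edgeSet.2 disjoint_compl_right).mono_right hA

theorem le_card_of_card_eq_min_ncard {α : Type*} {s : Finset α} {t : Set α} {m : ℕ}
    (ht : t.Finite) (hst : ↑s ⊆ t) (hcard : s.card = min t.ncard m) {a : α} (hat : a ∈ t)
    (has : a ∉ s) : m ≤ s.card := by
  have hlt : s.card < t.ncard := by
    rw [← Set.ncard_coe_finset]
    exact Set.ncard_lt_ncard (Set.ssubset_iff_of_subset hst |>.2 ⟨a, hat, has⟩) ht
  omega

theorem le_encard_fiber_of_notMem_biUnion {α : Type*} [Finite α] [DecidableEq α] {f : α → ℕ}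
    {n m : ℕ} (hf : ∀ a, f a ≤ n) {s : ℕ → Finset α} (hs : ∀ i ≤ n, ∀ a ∈ s i, f a = i)
    (hcard : ∀ i ≤ n, (s i).card = min {a | f a = i}.ncard m) {a : α}
    (ha : a ∉ (↑((Finset.range (n + 1)).biUnion s) : Set α)) :
    m ≤ {b ∈ (↑((Finset.range (n + 1)).biUnion s) : Set α) | f b = f a}.encard := by
  have hsub : s (f a) ⊆ (Finset.range (n + 1)).biUnion s :=
    Finset.subset_biUnion_of_mem s (Finset.mem_range_succ_iff.2 (hf a))
  have hle : m ≤ (s (f a)).card :=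
    le_card_of_card_eq_min_ncard (Set.toFinite _) (hs _ (hf a)) (hcard _ (hf a)) rfl
      fun has => ha (hsub has)
  grw [hle, ← Set.encard_coe_eq_coe_finsetCard]
  exact Set.encard_le_encard fun b hb => ⟨hsub hb, hs _ (hf a) b hb⟩

theorem map_univ_val_eq_of_perm {α β : Type*} [Fintype α] {f g : α → β} (p : Equiv.Perm α)
    (hfg : ∀ a, g (p a) = f a) : Finset.univ.val.map g = Finset.univ.val.map f := by
  calc Finset.univ.val.map g = (Finset.univ.val.map p).map g := by
        rw [Multiset.map_univ_val_equiv]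
    _ = Finset.univ.val.map f := by
        rw [Multiset.map_map]
        exact Multiset.map_congr rfl fun a _ => hfg a

theorem apply_swap_eq_of_apply_eq {α β : Type*} [DecidableEq α] {f : α → β} {a b : α}
    (hab : f a = f b) (x : α) : f (Equiv.swap a b x) = f x := by
  rw [Equiv.swap_apply_def]
  split_ifs with ha hb
  · rw [ha, hab]
  · rw [hb, hab]
  · rfl

theorem image_swap_sdiff_of_mem {α : Type*} [DecidableEq α] {s t : Set α} {a b : α}
    (has : a ∈ s) (hbs : b ∉ s) (hbt : b ∈ t) :
    Equiv.swap a b '' s \ t = (s \ t) \ {a} := by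
  rw [Equiv.image_swap_of_mem_of_notMem has hbs, sdiff_right_comm, Set.insert_sdiff_of_mem _ hbt]

theorem exists_mem_forall_compl_adj {V : Type*} {G : SimpleGraph V} {Δ : ℕ}
    {T : Finset V} (hT : ∀ u ∈ T, (G.neighborSet u).encard ≤ Δ) {S : Set V} {v : V} (hvT : v ∈ T)
    (hvS : v ∉ S) (hcard : (T.card * (Δ + 1) : ℕ) ≤ S.encard) :
    ∃ w ∈ S, ∀ u ∈ T, Gᶜ.Adj u w := by
  by_contra! hS
  have hsub : insert v S ⊆ ⋃ u ∈ T, insert u (G.neighborSet u) := by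
    refine Set.insert_subset (Set.mem_biUnion hvT (Set.mem_insert _ _)) fun w hw => ?_
    obtain ⟨u, hu, huw⟩ := hS w hw
    refine Set.mem_biUnion hu ?_
    simpa [compl_adj, or_iff_not_imp_left, eq_comm] using huw
  have hle : S.encard + 1 ≤ (T.card * (Δ + 1) : ℕ) :=
    calc S.encard + 1 = (insert v S).encard := (Set.encard_insert_of_notMem hvS).symm
      _ ≤ (⋃ u ∈ T, insert u (G.neighborSet u)).encard := Set.encard_le_encard hsub
      _ ≤ ∑ u ∈ T, (insert u (G.neighborSet u)).encard := T.set_encard_biUnion_le _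
      _ ≤ ∑ _u ∈ T, ((Δ : ℕ∞) + 1) := Finset.sum_le_sum fun u hu =>
          (Set.encard_insert_le _ u).trans (by gcongr; exact hT u hu)
      _ = (T.card * (Δ + 1) : ℕ) := by simp [mul_add]
  have hlt : ((T.card * (Δ + 1) + 1 : ℕ) : ℕ∞) ≤ (T.card * (Δ + 1) : ℕ) := by
    grw [← hle, ← hcard, Nat.cast_add_one]
  exact absurd (Nat.cast_le.1 hlt) (by omega)

section Endpoints

variable {V : Type*} [DecidableEq V] {G : SimpleGraph V} {A : Finset (Sym2 V)}

/-- The set of all endpoints of the pairs in `A`, the vertices on which adding `A` can have an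
effect. -/
def endpoints (A : Finset (Sym2 V)) : Finset V :=
  A.biUnion Sym2.toFinset

theorem mem_endpoints {v : V} : v ∈ endpoints A ↔ ∃ e ∈ A, v ∈ e := by
  simp only [endpoints, Finset.mem_biUnion, Sym2.mem_toFinset]

theorem card_endpoints_le (A : Finset (Sym2 V)) : (endpoints A).card ≤ 2 * A.card := by
  rw [mul_comm]
  refine Finset.card_biUnion_le_card_mul _ _ _ fun e _ => ?_
  rw [Sym2.card_toFinset]
  split_ifs <;> omega

theorem endpoints_image_map {V' : Type*} [DecidableEq V'] (f : V → V') (A : Finset (Sym2 V)) :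
    endpoints (A.image (Sym2.map f)) = (endpoints A).image f := by
  rw [endpoints, endpoints, Finset.image_biUnion, Finset.biUnion_image]
  refine Finset.biUnion_congr rfl fun e _ => ?_
  ext x
  simp only [Sym2.mem_toFinset, Finset.mem_image, Sym2.mem_map]

theorem ndeg_sup_fromEdgeSet_image {p : Equiv.Perm V} (hG : ∀ v, (G.neighborSet v).Finite)
    (hp : ∀ v, ndeg G (p v) = ndeg G v) (hA : ↑A ⊆ Gᶜ.edgeSet)
    (hpA : ↑(A.image (Sym2.map p)) ⊆ Gᶜ.edgeSet) (v : V) :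
    ndeg (G ⊔ fromEdgeSet ↑(A.image (Sym2.map p))) (p v) = ndeg (G ⊔ fromEdgeSet ↑A) v := by
  have hmap : fromEdgeSet ↑(A.image (Sym2.map p)) = (fromEdgeSet ↑A).map p.toEmbedding := by
    rw [Finset.coe_image]
    exact fromEdgeSet_image_map p.toEmbedding _
  rw [ndeg_sup_of_disjoint (disjoint_fromEdgeSet_of_subset_edgeSet_compl hpA) (hG _)
      (finite_neighborSet_fromEdgeSet (Finset.finite_toSet _) _),
    ndeg_sup_of_disjoint (disjoint_fromEdgeSet_of_subset_edgeSet_compl hA) (hG _)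
      (finite_neighborSet_fromEdgeSet (Finset.finite_toSet _) _), hp, hmap]
  exact congrArg _ (ndeg_map _ p.toEmbedding v)

theorem image_map_swap_subset_edgeSet_compl {v w : V} (hA : ↑A ⊆ Gᶜ.edgeSet)
    (hw : ∀ u ∈ endpoints A, Gᶜ.Adj u w) :
    ↑(A.image (Sym2.map (Equiv.swap v w))) ⊆ Gᶜ.edgeSet := by
  have hswap {u : V} (hu : u ∈ endpoints A) (huv : u ≠ v) : Equiv.swap v w u = u :=
    Equiv.swap_apply_of_ne_of_ne huv (hw u hu).ne
  rw [Finset.coe_image, Set.image_subset_iff]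
  intro e he
  have hmem : ∀ u ∈ e, u ∈ endpoints A := fun u hu => mem_endpoints.2 ⟨e, he, hu⟩
  by_cases hve : v ∈ e
  · obtain ⟨b, rfl⟩ := Sym2.mem_iff_exists.1 hve
    have hb : b ∈ endpoints A := hmem b (Sym2.mem_mk_right v b)
    have hbv : b ≠ v := ((mem_edgeSet _).1 (hA he)).ne'
    rw [Set.mem_preimage, Sym2.map_mk, Equiv.swap_apply_left, hswap hb hbv]
    exact (hw b hb).symm
  · have hfix : Sym2.map (Equiv.swap v w) e = e :=
      (Sym2.map_congr fun u hu => hswap (hmem u hu) (ne_of_mem_of_not_mem hu hve)).trans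
        (Sym2.map_id' ▸ rfl)
    rw [Set.mem_preimage, hfix]
    exact hA he

end Endpoints

theorem edge_addition_solution_inside_W_general {V : Type*} {G : SimpleGraph V} {k Δ : ℕ}
    (hG : ∀ v, (G.neighborSet v).encard ≤ Δ) {W : Set V}
    (hW : ∀ v ∉ W, (2 * k * (Δ + 1) : ℕ) ≤ {w ∈ W | ndeg G w = ndeg G v}.encard)
    {A : Finset (Sym2 V)} (hA : ↑A ⊆ Gᶜ.edgeSet) (hAcard : A.card ≤ k) :
    ∃ (B : Finset (Sym2 V)) (p : Equiv.Perm V), ↑B ⊆ Gᶜ.edgeSet ∧ B.card ≤ k ∧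
      (∀ v, ndeg (G ⊔ fromEdgeSet ↑B) (p v) = ndeg (G ⊔ fromEdgeSet ↑A) v) ∧
      ∀ e ∈ B, ∀ v ∈ e, v ∈ W := by
  classical
  induction hn : (↑(endpoints A) \ W : Set V).ncard using Nat.strong_induction_on
    generalizing A with
  | _ n ih =>
  by_cases hinside : ∀ v ∈ endpoints A, v ∈ W
  · exact ⟨A, 1, hA, hAcard, fun _ => rfl, fun e he v hv =>
      hinside v (mem_endpoints.2 ⟨e, he, hv⟩)⟩
  push Not at hinside
  obtain ⟨v, hvA, hvW⟩ := hinside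
  have hlarge : ((endpoints A).card * (Δ + 1) : ℕ) ≤ {w ∈ W | ndeg G w = ndeg G v}.encard := by
    grw [← hW v hvW, card_endpoints_le, hAcard]
  obtain ⟨w, ⟨hwW, hdeg⟩, hw⟩ :=
    exists_mem_forall_compl_adj (fun u _ => hG u) hvA (fun hv => hvW hv.1) hlarge
  have hwA : w ∉ endpoints A := fun hwA => (hw w hwA).ne rfl
  have hdecr : (↑(endpoints (A.image (Sym2.map (Equiv.swap v w)))) \ W : Set V).ncard < n := by
    rw [← hn, endpoints_image_map, Finset.coe_image, image_swap_sdiff_of_mem hvA hwA hwW]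
    exact Set.ncard_sdiff_singleton_lt_of_mem ⟨hvA, hvW⟩ (Set.toFinite _)
  have hA' := image_map_swap_subset_edgeSet_compl (v := v) hA hw
  obtain ⟨B, p, hB, hBcard, hBdeg, hBW⟩ :=
    ih _ hdecr hA' (Finset.card_image_le.trans hAcard) rfl
  refine ⟨B, p * Equiv.swap v w, hB, hBcard, fun x => (hBdeg _).trans ?_, hBW⟩
  exact ndeg_sup_fromEdgeSet_image (fun u => Set.finite_of_encard_le_coe (hG u))
    (apply_swap_eq_of_apply_eq hdeg.symm) hA hA' x

theorem edge_addition_solution_inside_W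
    {V : Type*} [Fintype V] [DecidableEq V] (G : SimpleGraph V)
    (k Δ : ℕ) (σ : Multiset ℕ) (hσub : ∀ x ∈ σ, x ≤ Δ) (hσmem : Δ ∈ σ)
    (hG : ∀ v : V, ndeg G v ≤ Δ)
    (Ws : ℕ → Finset V)
    (hWsub : ∀ i ≤ Δ, ∀ v ∈ Ws i, ndeg G v = i)
    (hWcard : ∀ i ≤ Δ,
      (Ws i).card = min {v : V | ndeg G v = i}.ncard (2 * k * (Δ + 1)))
    (A : Finset (Sym2 V))
    (hA : ∀ e ∈ A, ¬ e.IsDiag ∧ e ∉ G.edgeSet)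
    (hAcard : A.card ≤ k)
    (hAdeg : (Finset.univ.val.map fun v : V =>
        ndeg (G ⊔ SimpleGraph.fromEdgeSet ↑A) v) = σ) :
    ∃ B : Finset (Sym2 V),
      (∀ e ∈ B, ¬ e.IsDiag ∧ e ∉ G.edgeSet) ∧ B.card ≤ k ∧
      (Finset.univ.val.map fun v : V =>
        ndeg (G ⊔ SimpleGraph.fromEdgeSet ↑B) v) = σ ∧
      ∀ e ∈ B, ∀ v ∈ e, v ∈ (Finset.range (Δ + 1)).biUnion Ws := by
  have hG' : ∀ v, (G.neighborSet v).encard ≤ Δ := fun v =>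
    (Set.toFinite _).cast_ncard_eq.symm.trans_le (Nat.cast_le.2 (hG v))
  obtain ⟨B, p, hB, hBcard, hBdeg, hBW⟩ := edge_addition_solution_inside_W_general hG'
    (fun _ => le_encard_fiber_of_notMem_biUnion hG hWsub hWcard)
    (subset_edgeSet_compl_iff.2 hA) hAcard
  exact ⟨B, subset_edgeSet_compl_iff.1 hB, hBcard,
    (map_univ_val_eq_of_perm p hBdeg).trans hAdeg, hBW⟩
end
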